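/- Let C ⊆ X be closed. Then sup { −h(μ)/∫Λ dμ : μ ∈ 𝒫_S(Σ^ℕ), Uμ ∈ C } ≤ f̲^{U,Λ}(C). -/

import Mathlib

open MeasureTheory Filter Topology Metric Set
open scoped ENNReal NNReal Classical

namespace Multifractal

/-- Infinite strings over `{1,…,N}`. -/
abbrev Seq (N : ℕ) := ℕ → Fin N

/-- Finite strings over `{1,…,N}` (the empty string is excluded where appropriate). -/
abbrev Word (N : ℕ) := List (Fin N)

variable {N : ℕ}

/-- The shift map on `Σ^ℕ`. -/
def shift : Seq N → Seq N := fun x n => x (n + 1)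

/-- The cylinder `[w]` generated by a finite string `w`. -/
def cylinder (w : Word N) : Set (Seq N) :=
  {x : Seq N | ∀ (k : ℕ) (h : k < w.length), x k = w.get ⟨k, h⟩}

/-- Birkhoff sum `∑_{k<n} φ(S^k x)`. -/
noncomputable def birkhoff (φ : Seq N → ℝ) (n : ℕ) (x : Seq N) : ℝ :=
  ∑ k ∈ Finset.range n, φ (shift^[k] x)

/-- `s_w = sup_{x ∈ [w]} exp (∑_{k<|w|} Λ(S^k x))`. -/
noncomputable def sWord (Λ : Seq N → ℝ) (w : Word N) : ℝ :=
  sSup ((fun x => Real.exp (birkhoff Λ w.length x)) '' cylinder w)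

/-- Bounded distortion (condition (C3)): `exp(S_nΛ(i))/exp(S_nΛ(j)) ∈ [1/c, c]`
whenever `i|n = j|n`.  (By symmetry in `i,j` the one-sided bound suffices.) -/
def BddDistortion (Λ : Seq N → ℝ) (c : ℝ) : Prop :=
  ∀ (n : ℕ) (i j : Seq N), (∀ k < n, i k = j k) →
    Real.exp (birkhoff Λ n i) ≤ c * Real.exp (birkhoff Λ n j)

/-- The empirical measure `L_n x = (1/n) ∑_{k<n} δ_{S^k x}` (junk value `δ_x` for `n = 0`). -/
noncomputable def emp (n : ℕ) (x : Seq N) : ProbabilityMeasure (Seq N) :=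
  if h : n = 0 then ⟨Measure.dirac x, inferInstance⟩
  else
    ⟨(n : ℝ≥0∞)⁻¹ • ∑ k ∈ Finset.range n, Measure.dirac (shift^[k] x), by
      constructor
      simp only [Measure.smul_apply, Measure.coe_finset_sum, Finset.sum_apply, measure_univ,
        Finset.sum_const, Finset.card_range, nsmul_eq_mul, mul_one, smul_eq_mul]
      exact ENNReal.inv_mul_cancel (Nat.cast_ne_zero.mpr h) (ENNReal.natCast_ne_top n)⟩

/-- Shift invariance of a probability measure. -/
def Invariant (μ : ProbabilityMeasure (Seq N)) : Prop :=
  μ.toMeasure.map shift = μ.toMeasure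

/-- `n`-th partition entropy `-∑_{|w|=n} μ[w] log μ[w]`. -/
noncomputable def entropyAux (μ : ProbabilityMeasure (Seq N)) (n : ℕ) : ℝ :=
  -∑ w : Fin n → Fin N,
      (μ (cylinder (List.ofFn w)) : ℝ) * Real.log (μ (cylinder (List.ofFn w)) : ℝ)

/-- The Kolmogorov–Sinai entropy of a (shift-invariant) measure on the full shift,
via the generating partition into cylinders. -/
noncomputable def entropy (μ : ProbabilityMeasure (Seq N)) : ℝ :=
  Filter.atTop.liminf fun n => entropyAux μ n / n

/-- Abscissa of convergence of the "zeta-function" `s ↦ ∑ a_w^s`, the sum ranging over the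
nonempty finite strings satisfying `P`; values in `EReal` (so `⊤` if never summable and `⊥`
if always summable, e.g. for an empty index set). -/
noncomputable def sigmaAbs (a : Word N → ℝ) (P : Word N → Prop) : EReal :=
  sInf ((fun t : ℝ => (t : EReal)) ''
    {t : ℝ | Summable fun w : {w : Word N // w ≠ [] ∧ P w} => a w.1 ^ t})

variable {X : Type*}

/-- `U(L_{|w|}[w]) ⊆ B`. -/
def inTarget (U : ProbabilityMeasure (Seq N) → X) (B : Set X) (w : Word N) : Prop :=
  ∀ x ∈ cylinder w, U (emp w.length x) ∈ B

/-- The closed `r`-neighbourhood `B(C,r)` of a set. -/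
def cball [MetricSpace X] (C : Set X) (r : ℝ) : Set X := {x | infDist x C ≤ r}

/-- The counting function `N_δ^{U,Λ}(C,r)`: number of strings `w` with `s_w ≈ δ` and
`U(L_{|w|}[w]) ⊆ B(C,r)`. -/
noncomputable def Ncount [MetricSpace X] (Λ : Seq N → ℝ) (U : ProbabilityMeasure (Seq N) → X)
    (C : Set X) (r δ : ℝ) : ℕ :=
  Set.ncard {w : Word N | w ≠ [] ∧ sWord Λ w ≤ δ ∧ δ < sWord Λ w.dropLast ∧
    inTarget U (cball C r) w}

/-- `log m / (-log δ)`, read as `-∞` when `m = 0`. -/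
noncomputable def ratioE (m : ℕ) (δ : ℝ) : EReal :=
  if m = 0 then ⊥ else (((Real.log m) / (-Real.log δ) : ℝ) : EReal)

/-- The `r`-approximate lower coarse multifractal spectrum `f̲^{U,Λ}(C,r)`. -/
noncomputable def coarseLowerR [MetricSpace X] (Λ : Seq N → ℝ)
    (U : ProbabilityMeasure (Seq N) → X) (C : Set X) (r : ℝ) : EReal :=
  Filter.liminf (fun δ : ℝ => ratioE (Ncount Λ U C r δ) δ) (𝓝[>] (0 : ℝ))

/-- The lower coarse multifractal spectrum `f̲^{U,Λ}(C) = lim_{r↘0} f̲^{U,Λ}(C,r)`;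
since `f̲^{U,Λ}(C,r)` is nondecreasing in `r`, the limit is the infimum over `r > 0`. -/
noncomputable def coarseLower [MetricSpace X] (Λ : Seq N → ℝ)
    (U : ProbabilityMeasure (Seq N) → X) (C : Set X) : EReal :=
  ⨅ (r : ℝ) (_ : 0 < r), coarseLowerR Λ U C r

/-- The variational quantity `sup { -h(μ)/∫Λ dμ : μ shift-invariant, Uμ ∈ C }`. -/
noncomputable def varSup (Λ : Seq N → ℝ) (U : ProbabilityMeasure (Seq N) → X)
    (C : Set X) : EReal :=
  sSup {x : EReal | ∃ μ : ProbabilityMeasure (Seq N), Invariant μ ∧ U μ ∈ C ∧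
    x = ((-(entropy μ) / ∫ y, Λ y ∂μ.toMeasure : ℝ) : EReal)}

end Multifractal

namespace Multifractal

/-!
Let `μ` be shift-invariant with `U μ ∈ C`. Cut infinite strings into blocks of a large length `n`
and draw the blocks independently from `μ`. By the strong law of large numbers the concatenation of
`m` such blocks almost surely has its empirical measure near `μ` for large `m`, while its
probability is at most about `exp (-m n h(μ))`; hence there are at least about `exp (B h(μ))`
strings of length `B` with empirical measure near `μ`. By continuity of `Λ` such strings have size
about `exp (B ∫ Λ dμ)`. Choose `B` slightly smaller than `log δ / ∫ Λ dμ` and prolong each of them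
until its size is about `δ`. Since `Λ` is bounded away from `0`, this takes only a small proportion
of `B` further letters, so the empirical measure stays near `μ` and its image under `U` near `C`.
Different strings of length `B` have different prolongations, so `N_δ(C, r)` is at least about
`exp (B h(μ))`.
-/

section Probability

variable {Ω : Type*} [MeasurableSpace Ω]

theorem tendsto_measure_of_ae_eventually_mem {μ : Measure Ω} {E : ℕ → Set Ω}
    (h : ∀ᵐ ω ∂μ, ∀ᶠ m in atTop, ω ∈ E m) :
    Tendsto (fun m => μ (E m)) atTop (𝓝 (μ univ)) := by
  set F : ℕ → Set Ω := fun k => {ω | ∀ m ≥ k, ω ∈ E m}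
  have hF : Monotone F := fun k l hkl ω hω m hm => hω m (hkl.trans hm)
  have hunion : μ (⋃ k, F k) = μ univ := by
    refine measure_congr (eventuallyEq_univ.2 ?_)
    filter_upwards [h] with ω hω using mem_iUnion.2 (eventually_atTop.1 hω)
  exact tendsto_of_tendsto_of_tendsto_of_le_of_le (hunion ▸ tendsto_measure_iUnion_atTop hF)
    tendsto_const_nhds (fun m => measure_mono fun _ (hω : _ ∈ F m) => hω m le_rfl)
    fun _ => measure_mono (subset_univ _)

theorem ae_tendsto_average_infinitePi {μ : Measure Ω} [IsProbabilityMeasure μ] {g : Ω → ℝ}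
    (hg : Measurable g) (hgint : Integrable g μ) :
    ∀ᵐ ω ∂Measure.infinitePi fun _ : ℕ => μ,
      Tendsto (fun m : ℕ => (∑ j ∈ Finset.range m, g (ω j)) / m) atTop (𝓝 (∫ x, g x ∂μ)) := by
  have heval := fun j : ℕ => measurePreserving_eval_infinitePi (fun _ : ℕ => μ) j
  have hident : ∀ j, ProbabilityTheory.IdentDistrib (fun ω : ℕ → Ω => g (ω j))
      (fun ω => g (ω 0)) (Measure.infinitePi fun _ => μ) (Measure.infinitePi fun _ => μ) := fun j =>
    ProbabilityTheory.IdentDistrib.comp (u := g) ⟨(measurable_pi_apply j).aemeasurable,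
      (measurable_pi_apply 0).aemeasurable, by rw [(heval j).map_eq, (heval 0).map_eq]⟩ hg
  have hmean : ∫ ω, g (ω 0) ∂(Measure.infinitePi fun _ : ℕ => μ) = ∫ x, g x ∂μ := by
    conv_rhs => rw [← (heval 0).map_eq]
    exact (integral_map (heval 0).measurable.aemeasurable hg.aestronglyMeasurable).symm
  rw [← hmean]
  have hindep : ProbabilityTheory.iIndepFun (fun (j : ℕ) (ω : ℕ → Ω) => g (ω j))
      (Measure.infinitePi fun _ => μ) :=
    ProbabilityTheory.iIndepFun_infinitePi (X := fun _ => g) fun _ => hg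
  exact ProbabilityTheory.strong_law_ae_real (fun (j : ℕ) (ω : ℕ → Ω) => g (ω j))
    ((heval 0).integrable_comp_of_integrable hgint) (fun _ _ hij => hindep.indepFun hij) hident

theorem exists_injOn_measureReal_le_card_mul {A : Type*} [Finite A] {μ : Measure Ω}
    [IsFiniteMeasure μ] (ρ : Ω → A) {E : Set Ω} {b : ℝ}
    (hb : ∀ ω ∈ E, μ.real (ρ ⁻¹' {ρ ω}) ≤ b) :
    ∃ T : Finset Ω, ↑T ⊆ E ∧ InjOn ρ T ∧ μ.real E ≤ T.card * b := by
  obtain ⟨S, hSE, hS⟩ := exists_subset_bijOn E ρ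
  have hSfin : S.Finite := Set.Finite.of_injOn hS.mapsTo hS.injOn (toFinite _)
  lift S to Finset Ω using hSfin
  refine ⟨S, hSE, hS.injOn, ?_⟩
  have hcover : E ⊆ ⋃ ω ∈ S, ρ ⁻¹' {ρ ω} := fun ω hω => by
    obtain ⟨η, hη, hηω⟩ := hS.surjOn (mem_image_of_mem ρ hω)
    exact mem_biUnion hη hηω.symm
  calc μ.real E ≤ μ.real (⋃ ω ∈ S, ρ ⁻¹' {ρ ω}) :=
        measureReal_mono hcover (measure_ne_top _ _)
    _ ≤ ∑ ω ∈ S, μ.real (ρ ⁻¹' {ρ ω}) := measureReal_biUnion_finset_le _ _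
    _ ≤ S.card * b := by
      simpa using Finset.sum_le_card_nsmul S _ b fun ω hω => hb ω (hSE hω)

theorem measureReal_infinitePi_preimage_singleton {A : Type*} [MeasurableSpace A]
    [MeasurableSingletonClass A] {μ : Measure Ω} [IsProbabilityMeasure μ] {ρ : Ω → A}
    (hρ : Measurable ρ) (m : ℕ) (ω : ℕ → Ω) :
    (Measure.infinitePi fun _ : ℕ => μ).real
        ((fun (η : ℕ → Ω) (j : Fin m) => ρ (η j)) ⁻¹' {fun j : Fin m => ρ (ω j)})
      = ∏ j ∈ Finset.range m, μ.real (ρ ⁻¹' {ρ (ω j)}) := by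
  have hbox : (fun (η : ℕ → Ω) (j : Fin m) => ρ (η j)) ⁻¹' {fun j : Fin m => ρ (ω j)}
      = Set.pi (Finset.range m) fun j => ρ ⁻¹' {ρ (ω j)} := by
    ext η
    simp [funext_iff, Fin.forall_iff]
  rw [hbox, measureReal_def, Measure.infinitePi_pi _ fun j _ => hρ (measurableSet_singleton _),
    ENNReal.toReal_prod]
  rfl

section AsymptoticEquipartition

variable {A : Type*} [Fintype A] [MeasurableSpace A] [DiscreteMeasurableSpace A]
  {μ : Measure Ω} [IsProbabilityMeasure μ] {ρ : Ω → A}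

theorem integral_comp_eq_sum_measureReal_preimage (hρ : Measurable ρ) (G : A → ℝ) :
    ∫ ω, G (ρ ω) ∂μ = ∑ a, μ.real (ρ ⁻¹' {a}) * G a := by
  have := Measure.isProbabilityMeasure_map (μ := μ) hρ.aemeasurable
  rw [← integral_map hρ.aemeasurable (Measurable.of_discrete (f := G)).aestronglyMeasurable,
    integral_fintype .of_finite]
  simp [map_measureReal_apply hρ]

theorem eventually_measureReal_preimage_le_exp (hρ : Measurable ρ) {h : ℝ}
    (hh : h < ∑ a, Real.negMulLog (μ.real (ρ ⁻¹' {a}))) :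
    ∀ᵐ ω ∂Measure.infinitePi fun _ : ℕ => μ, ∀ᶠ m : ℕ in atTop,
      ∏ j ∈ Finset.range m, μ.real (ρ ⁻¹' {ρ (ω j)}) ≤ Real.exp (-(m * h)) := by
  have hmean : ∫ ω, Real.log (μ.real (ρ ⁻¹' {ρ ω})) ∂μ < -h := by
    rw [integral_comp_eq_sum_measureReal_preimage hρ fun a => Real.log (μ.real (ρ ⁻¹' {a}))]
    simp only [Real.negMulLog, neg_mul, Finset.sum_neg_distrib] at hh
    linarith
  have hlog : Measurable fun a : A => Real.log (μ.real (ρ ⁻¹' {a})) := .of_discrete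
  have hint : Integrable (fun ω => Real.log (μ.real (ρ ⁻¹' {ρ ω}))) μ := by
    have := Measure.isProbabilityMeasure_map (μ := μ) hρ.aemeasurable
    exact (Integrable.of_finite (μ := μ.map ρ)
      (f := fun a => Real.log (μ.real (ρ ⁻¹' {a})))).comp_measurable hρ
  filter_upwards [ae_tendsto_average_infinitePi (g := fun ω => Real.log (μ.real (ρ ⁻¹' {ρ ω})))
    (hlog.comp hρ) hint] with ω hω
  filter_upwards [hω.eventually_lt_const hmean, eventually_gt_atTop 0] with m hm hm0
  rw [div_lt_iff₀ (by exact_mod_cast hm0)] at hm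
  calc ∏ j ∈ Finset.range m, μ.real (ρ ⁻¹' {ρ (ω j)})
      ≤ ∏ j ∈ Finset.range m, Real.exp (Real.log (μ.real (ρ ⁻¹' {ρ (ω j)}))) :=
        Finset.prod_le_prod (fun j _ => measureReal_nonneg) fun j _ => Real.le_exp_log _
    _ = Real.exp (∑ j ∈ Finset.range m, Real.log (μ.real (ρ ⁻¹' {ρ (ω j)}))) :=
        (Real.exp_sum _ _).symm
    _ ≤ Real.exp (-(m * h)) := Real.exp_le_exp.2 (by linarith)

theorem eventually_exists_injOn_exp_mul_le_card (hρ : Measurable ρ) {h : ℝ}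
    (hh : h < ∑ a, Real.negMulLog (μ.real (ρ ⁻¹' {a}))) {E : ℕ → Set (ℕ → Ω)}
    (hE : ∀ᵐ ω ∂Measure.infinitePi fun _ : ℕ => μ, ∀ᶠ m in atTop, ω ∈ E m) :
    ∀ᶠ m : ℕ in atTop, ∃ T : Finset (ℕ → Ω), ↑T ⊆ E m ∧
      InjOn (fun (ω : ℕ → Ω) (j : Fin m) => ρ (ω j)) T ∧ Real.exp (m * h) ≤ T.card := by
  obtain ⟨h', hh', hh'H⟩ := exists_between hh
  set P := Measure.infinitePi fun _ : ℕ => μ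
  set G : ℕ → Set (ℕ → Ω) := fun m =>
    E m ∩ {ω | ∏ j ∈ Finset.range m, μ.real (ρ ⁻¹' {ρ (ω j)}) ≤ Real.exp (-(m * h'))}
  have hG : ∀ᵐ ω ∂P, ∀ᶠ m in atTop, ω ∈ G m := by
    filter_upwards [hE, eventually_measureReal_preimage_le_exp hρ hh'H] with ω h₁ h₂
    exact h₁.and h₂
  have hPG : ∀ᶠ m in atTop, 1 / 2 < P.real (G m) := by
    have := (ENNReal.tendsto_toReal (measure_ne_top P univ)).comp
      (tendsto_measure_of_ae_eventually_mem hG)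
    refine this.eventually_const_lt ?_
    simp only [measure_univ, ENNReal.toReal_one]
    norm_num
  have hgap : ∀ᶠ m : ℕ in atTop, Real.log 2 ≤ m * (h' - h) :=
    (tendsto_natCast_atTop_atTop.atTop_mul_const (sub_pos.2 hh')).eventually_ge_atTop _
  filter_upwards [hPG, hgap] with m hm hmgap
  obtain ⟨T, hTG, hTinj, hTcard⟩ := exists_injOn_measureReal_le_card_mul (μ := P)
    (fun (ω : ℕ → Ω) (j : Fin m) => ρ (ω j)) (E := G m) (b := Real.exp (-(m * h')))
    fun ω hω => (measureReal_infinitePi_preimage_singleton hρ m ω).trans_le hω.2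
  refine ⟨T, hTG.trans inter_subset_left, hTinj, ?_⟩
  rw [Real.exp_neg, ← div_eq_mul_inv] at hTcard
  calc Real.exp (m * h) ≤ Real.exp (m * h' - Real.log 2) := Real.exp_le_exp.2 (by linarith)
    _ = 1 / 2 * Real.exp (m * h') := by
      rw [Real.exp_sub, Real.exp_log two_pos]
      ring
    _ ≤ T.card := (le_div_iff₀ (Real.exp_pos _)).1 (hm.le.trans hTcard)

end AsymptoticEquipartition

theorem exists_finset_forall_integral_mem_of_mem_nhds [TopologicalSpace Ω] [OpensMeasurableSpace Ω]
    {μ : ProbabilityMeasure Ω} {V : Set (ProbabilityMeasure Ω)} (hV : V ∈ 𝓝 μ) :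
    ∃ F : Finset (BoundedContinuousFunction Ω ℝ), ∀ ν : ProbabilityMeasure Ω,
      (∀ f ∈ F, |∫ x, f x ∂ν.toMeasure - ∫ x, f x ∂μ.toMeasure| < 1) → ν ∈ V := by
  set s : BoundedContinuousFunction Ω ℝ → Set (ProbabilityMeasure Ω) := fun f =>
    {ν | |∫ x, f x ∂ν.toMeasure - ∫ x, f x ∂μ.toMeasure| < 1}
  have hle : (⨅ f, 𝓟 (s f)) ≤ 𝓝 μ := by
    refine (ProbabilityMeasure.tendsto_iff_forall_integral_tendsto
      (μs := fun ν => ν)).2 fun f => Metric.tendsto_nhds.2 fun ε hε => ?_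
    refine mem_of_superset (mem_iInf_of_mem (ε⁻¹ • f) (mem_principal_self _)) fun ν hν => ?_
    simp only [s, Set.mem_ofPred_eq, BoundedContinuousFunction.coe_smul,
      integral_const_mul, smul_eq_mul] at hν
    rwa [← mul_sub, abs_mul, abs_of_pos (inv_pos.2 hε), inv_mul_lt_iff₀ hε, mul_one] at hν
  obtain ⟨t, ht, htV⟩ := (hasBasis_iInf_principal_finite s).mem_iff.1 (hle hV)
  exact ⟨ht.toFinset, fun ν hν => htV (mem_iInter₂.2 fun f hf => hν f (ht.mem_toFinset.2 hf))⟩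

end Probability

section Birkhoff

variable {α G E : Type*} [AddCommMonoid G] [NormedAddCommGroup E] {f : α → α} {g : α → E}

theorem birkhoffSum_mul (f : α → α) (g : α → G) (m n : ℕ) (x : α) :
    birkhoffSum f g (m * n) x = birkhoffSum f^[n] (birkhoffSum f g n) m x := by
  induction m with
  | zero => simp
  | succ m ih =>
    rw [add_mul, one_mul, birkhoffSum_add, ih, birkhoffSum_succ, ← Function.iterate_mul, mul_comm n]

theorem continuous_birkhoffSum [TopologicalSpace α] [TopologicalSpace G] [ContinuousAdd G]
    {g : α → G} (hf : Continuous f) (hg : Continuous g) (n : ℕ) :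
    Continuous (birkhoffSum f g n) :=
  continuous_finsetSum _ fun k _ => hg.comp (hf.iterate k)

theorem birkhoffSum_le {φ : α → ℝ} {M : ℝ} (hφ : ∀ x, φ x ≤ M) (n : ℕ) (x : α) :
    birkhoffSum f φ n x ≤ n * M := by
  simpa [birkhoffSum] using Finset.sum_le_card_nsmul (Finset.range n) _ M fun k _ => hφ (f^[k] x)

theorem norm_birkhoffSum_le {M : ℝ} (hg : ∀ x, ‖g x‖ ≤ M) (n : ℕ) (x : α) :
    ‖birkhoffSum f g n x‖ ≤ n * M :=
  (norm_sum_le _ _).trans (birkhoffSum_le hg n x)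

theorem integral_birkhoffSum [MeasurableSpace α] [NormedSpace ℝ E] {μ : Measure α}
    (hf : MeasurePreserving f μ μ) (hg : Integrable g μ) (n : ℕ) :
    ∫ x, birkhoffSum f g n x ∂μ = (n : ℝ) • ∫ x, g x ∂μ := by
  have hterm : ∀ k, ∫ x, g (f^[k] x) ∂μ = ∫ x, g x ∂μ := fun k => by
    have hk := hf.iterate k
    conv_rhs => rw [← hk.map_eq]
    exact (integral_map hk.aemeasurable (hk.map_eq.symm ▸ hg.aestronglyMeasurable)).symm
  unfold birkhoffSum
  rw [integral_finsetSum (Finset.range n) (f := fun k x => g (f^[k] x)) fun k _ =>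
    (hf.iterate k).integrable_comp_of_integrable hg]
  simp [hterm, Nat.cast_smul_eq_nsmul]

variable [NormedSpace ℝ E]

theorem norm_birkhoffAverage_le {M : ℝ} (hg : ∀ x, ‖g x‖ ≤ M) (n : ℕ) (x : α) :
    ‖birkhoffAverage ℝ f g n x‖ ≤ M := by
  have hM : 0 ≤ M := (norm_nonneg _).trans (hg x)
  rw [birkhoffAverage, norm_smul, norm_inv, Real.norm_natCast]
  exact inv_mul_le_of_le_mul₀ n.cast_nonneg hM (norm_birkhoffSum_le hg n x)

theorem norm_birkhoffAverage_add_sub_le {M : ℝ} (hg : ∀ x, ‖g x‖ ≤ M) (n l : ℕ) (x : α) :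
    ‖birkhoffAverage ℝ f g (n + l) x - birkhoffAverage ℝ f g n x‖ ≤ 2 * M * l / (n + l) := by
  rcases (n + l).eq_zero_or_pos with h | h
  · obtain ⟨rfl, rfl⟩ := Nat.add_eq_zero_iff.1 h
    simp
  have hsum : ∀ k : ℕ, (k : ℝ) • birkhoffAverage ℝ f g k x = birkhoffSum f g k x := fun k => by
    rcases eq_or_ne k 0 with rfl | hk
    · simp
    · exact smul_inv_smul₀ (Nat.cast_ne_zero.2 hk) _
  have hnl : (0 : ℝ) < n + l := by exact_mod_cast h
  have hdiff : ((n : ℝ) + l) • (birkhoffAverage ℝ f g (n + l) x - birkhoffAverage ℝ f g n x)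
      = birkhoffSum f g l (f^[n] x) - (l : ℝ) • birkhoffAverage ℝ f g n x := by
    rw [smul_sub, add_smul (n : ℝ) l (birkhoffAverage ℝ f g n x), hsum n, ← Nat.cast_add,
      hsum (n + l), birkhoffSum_add]
    abel
  rw [le_div_iff₀' hnl, ← abs_of_pos hnl, ← Real.norm_eq_abs, ← norm_smul, hdiff]
  calc ‖birkhoffSum f g l (f^[n] x) - (l : ℝ) • birkhoffAverage ℝ f g n x‖
      ≤ ‖birkhoffSum f g l (f^[n] x)‖ + ‖(l : ℝ) • birkhoffAverage ℝ f g n x‖ := norm_sub_le _ _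
    _ ≤ l * M + l * M := by
      rw [norm_smul, Real.norm_natCast]
      gcongr
      exacts [norm_birkhoffSum_le hg l _, norm_birkhoffAverage_le hg n x]
    _ = 2 * M * l := by ring

end Birkhoff

section Blocks

variable {N : ℕ}

/-- The block formed by the first `n` letters of an infinite string; it plays the role of the
cylinder `[x|n]`. -/
def initialBlock (n : ℕ) (x : Seq N) : Fin n → Fin N := fun k => x k

theorem initialBlock_eq_iff {n : ℕ} {x y : Seq N} :
    initialBlock n x = initialBlock n y ↔ ∀ k < n, x k = y k := by
  simp [initialBlock, funext_iff, Fin.forall_iff]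

theorem initialBlock_eq_of_le {n L : ℕ} (hnL : n ≤ L) {x y : Seq N}
    (h : initialBlock L x = initialBlock L y) : initialBlock n x = initialBlock n y :=
  initialBlock_eq_iff.2 fun k hk => initialBlock_eq_iff.1 h k (hk.trans_le hnL)

theorem mem_cylinder_ofFn {n : ℕ} {w : Fin n → Fin N} {x : Seq N} :
    x ∈ cylinder (List.ofFn w) ↔ initialBlock n x = w := by
  simp [cylinder, initialBlock, funext_iff, Fin.forall_iff]

theorem cylinder_ofFn {n : ℕ} (w : Fin n → Fin N) :
    cylinder (List.ofFn w) = initialBlock n ⁻¹' {w} :=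
  Set.ext fun _ => mem_cylinder_ofFn

theorem measurable_initialBlock (n : ℕ) : Measurable (initialBlock n : Seq N → Fin n → Fin N) :=
  measurable_pi_lambda _ fun k => measurable_pi_apply (k : ℕ)

theorem initialBlock_surjective {n : ℕ} (hn : n ≠ 0) :
    Function.Surjective (initialBlock n : Seq N → Fin n → Fin N) := fun w => by
  refine ⟨fun k => if hk : k < n then w ⟨k, hk⟩ else w ⟨0, Nat.pos_of_ne_zero hn⟩, ?_⟩
  exact funext fun k => dif_pos k.2

theorem iterate_shift_apply (k : ℕ) (x : Seq N) (i : ℕ) : shift^[k] x i = x (k + i) := by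
  induction k generalizing x with
  | zero => simp
  | succ k ih => rw [Function.iterate_succ_apply, ih, shift, add_right_comm]

theorem continuous_shift : Continuous (shift : Seq N → Seq N) :=
  continuous_pi fun i => continuous_apply (i + 1)

theorem exists_forall_abs_sub_lt_of_initialBlock_eq {φ : Seq N → ℝ} (hφ : Continuous φ) {ε : ℝ}
    (hε : 0 < ε) :
    ∃ K : ℕ, ∀ x y : Seq N, initialBlock K x = initialBlock K y → |φ x - φ y| < ε := by
  let _ : MetricSpace (Seq N) := PiNat.metricSpace
  obtain ⟨δ, hδ, h⟩ := Metric.uniformContinuous_iff.1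
    (CompactSpace.uniformContinuous_of_continuous hφ) ε hε
  obtain ⟨K, hK⟩ := exists_pow_lt_of_lt_one hδ (by norm_num : (1 / 2 : ℝ) < 1)
  exact ⟨K, fun x y hxy => h <| (PiNat.mem_cylinder_iff_dist_le.1 fun k hk =>
    initialBlock_eq_iff.1 hxy k hk).trans_lt hK⟩

theorem eventually_abs_birkhoffSum_sub_le {φ : Seq N → ℝ} (hφ : Continuous φ) {ε : ℝ} (hε : 0 < ε) :
    ∀ᶠ n : ℕ in atTop, ∀ x y : Seq N, initialBlock n x = initialBlock n y →
      |birkhoffSum shift φ n x - birkhoffSum shift φ n y| ≤ n * ε := by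
  obtain ⟨K, hK⟩ := exists_forall_abs_sub_lt_of_initialBlock_eq hφ (half_pos hε)
  obtain ⟨M, hM⟩ := isCompact_univ.exists_bound_of_continuousOn
    (continuous_birkhoffSum continuous_shift hφ K).continuousOn
  have hlarge : ∀ᶠ n : ℕ in atTop, 2 * M / (ε / 2) ≤ n :=
    tendsto_natCast_atTop_atTop.eventually_ge_atTop _
  filter_upwards [hlarge, eventually_ge_atTop K] with n hn hnK x y hxy
  obtain ⟨l, rfl⟩ := Nat.exists_eq_add_of_le' hnK
  have hhead : |birkhoffSum shift φ l x - birkhoffSum shift φ l y| ≤ l * (ε / 2) := by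
    simp only [birkhoffSum, ← Finset.sum_sub_distrib]
    refine (Finset.abs_sum_le_sum_abs _ _).trans ?_
    refine (Finset.sum_le_card_nsmul (Finset.range l) _ (ε / 2) fun k hk => (hK _ _ ?_).le).trans
      (by simp)
    refine initialBlock_eq_iff.2 fun i hi => ?_
    rw [iterate_shift_apply, iterate_shift_apply]
    exact initialBlock_eq_iff.1 hxy _ (by have := Finset.mem_range.1 hk; omega)
  have htail :
      |birkhoffSum shift φ K (shift^[l] x) - birkhoffSum shift φ K (shift^[l] y)| ≤ 2 * M :=
    (abs_sub _ _).trans (by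
      simpa [two_mul] using add_le_add (hM (shift^[l] x) trivial) (hM (shift^[l] y) trivial))
  rw [div_le_iff₀ (half_pos hε)] at hn
  calc |birkhoffSum shift φ (l + K) x - birkhoffSum shift φ (l + K) y|
      = |(birkhoffSum shift φ l x - birkhoffSum shift φ l y)
          + (birkhoffSum shift φ K (shift^[l] x) - birkhoffSum shift φ K (shift^[l] y))| := by
        congr 1
        rw [birkhoffSum_add, birkhoffSum_add]
        exact add_sub_add_comm _ _ _ _
    _ ≤ l * (ε / 2) + 2 * M := (abs_add_le _ _).trans (add_le_add hhead htail)
    _ ≤ (l + K : ℕ) * (ε / 2) + (l + K : ℕ) * (ε / 2) := by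
      gcongr
      omega
    _ = (l + K : ℕ) * ε := by ring

end Blocks

section EmpiricalMeasure

variable {N : ℕ}

theorem integral_emp (φ : Seq N → ℝ) {n : ℕ} (hn : n ≠ 0) (x : Seq N) :
    ∫ y, φ y ∂(emp n x).toMeasure = birkhoffAverage ℝ shift φ n x := by
  have hemp : (emp n x).toMeasure =
      (n : ℝ≥0∞)⁻¹ • ∑ k ∈ Finset.range n, Measure.dirac (shift^[k] x) :=
    congrArg Subtype.val (dif_neg hn)
  rw [hemp, integral_smul_measure,
    integral_finsetSum_measure fun k _ => integrable_dirac (by simp)]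
  simp [birkhoffAverage, birkhoffSum]

theorem exists_nhds_forall_emp_mem {μ : ProbabilityMeasure (Seq N)}
    {V : Set (ProbabilityMeasure (Seq N))} (hV : V ∈ 𝓝 μ) :
    ∃ W ∈ 𝓝 μ, ∃ θ > (0 : ℝ), ∀ (n l : ℕ) x, n ≠ 0 → l ≤ θ * n →
      emp n x ∈ W → emp (n + l) x ∈ V := by
  obtain ⟨F, hF⟩ := exists_finset_forall_integral_mem_of_mem_nhds hV
  obtain ⟨M, hM⟩ : ∃ M : ℝ, ∀ f ∈ F, ‖f‖ ≤ M := by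
    obtain ⟨M, hM⟩ := (F.image norm).bddAbove
    exact ⟨M, fun f hf => hM (Finset.mem_coe.2 (Finset.mem_image_of_mem _ hf))⟩
  refine ⟨{ν | ∀ f ∈ F, |∫ y, f y ∂ν.toMeasure - ∫ y, f y ∂μ.toMeasure| < 1 / 2}, ?_,
    (4 * (|M| + 1))⁻¹, by positivity, fun n l x hn hl hW => hF _ fun f hf => ?_⟩
  · refine (Filter.eventually_all_finset F).2 fun f _ => ?_
    have hcont : Continuous fun ν : ProbabilityMeasure (Seq N) =>
        |∫ y, f y ∂ν.toMeasure - ∫ y, f y ∂μ.toMeasure| :=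
      ((ProbabilityMeasure.continuous_integral_boundedContinuousFunction f).sub
        continuous_const).abs
    exact hcont.continuousAt.eventually_lt_const (by simp)
  have hprolong := norm_birkhoffAverage_add_sub_le (f := shift)
    (fun y => (f.norm_coe_le_norm y).trans (hM f hf)) n l x
  rw [← integral_emp _ (by omega), ← integral_emp _ hn, Real.norm_eq_abs] at hprolong
  have hsmall : 2 * M * l / (n + l) ≤ 1 / 2 := by
    rw [inv_mul_eq_div, le_div_iff₀ (by positivity)] at hl
    rw [div_le_iff₀ (by positivity)]
    nlinarith [le_abs_self M, (Nat.cast_nonneg l : (0 : ℝ) ≤ l)]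
  have := abs_sub_le (∫ y, f y ∂(emp (n + l) x).toMeasure) (∫ y, f y ∂(emp n x).toMeasure)
    (∫ y, f y ∂μ.toMeasure)
  linarith [hW f hf]

end EmpiricalMeasure

section TypicalBlocks

variable {N : ℕ} {μ : ProbabilityMeasure (Seq N)}

theorem Invariant.measurePreserving (hμ : Invariant μ) :
    MeasurePreserving shift μ.toMeasure μ.toMeasure :=
  ⟨continuous_shift.measurable, hμ⟩

/-- The concatenation of the blocks formed by the first `n` letters of `x 0`, `x 1`, …. -/
def concatBlocks (n : ℕ) (x : ℕ → Seq N) : Seq N := fun k => x (k / n) (k % n)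

theorem concatBlocks_apply_mul_add {n k : ℕ} (hk : k < n) (x : ℕ → Seq N) (j : ℕ) :
    concatBlocks n x (j * n + k) = x j k := by
  simp only [concatBlocks]
  rw [mul_comm, Nat.mul_add_div (by omega), Nat.div_eq_of_lt hk, Nat.mul_add_mod,
    Nat.mod_eq_of_lt hk, add_zero]

theorem initialBlock_iterate_shift_eq {n m j : ℕ} (hj : j < m) {x : ℕ → Seq N} {y : Seq N}
    (hy : initialBlock (m * n) y = initialBlock (m * n) (concatBlocks n x)) :
    initialBlock n (shift^[j * n] y) = initialBlock n (x j) := by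
  refine initialBlock_eq_iff.2 fun k hk => ?_
  have hjk : j * n + k < m * n := by nlinarith
  rw [iterate_shift_apply, initialBlock_eq_iff.1 hy _ hjk, concatBlocks_apply_mul_add hk]

theorem abs_birkhoffSum_sub_sum_le {φ : Seq N → ℝ} {n : ℕ} {ε : ℝ}
    (hφ : ∀ x y : Seq N, initialBlock n x = initialBlock n y →
      |birkhoffSum shift φ n x - birkhoffSum shift φ n y| ≤ ε)
    {m : ℕ} {x : ℕ → Seq N} {y : Seq N}
    (hy : initialBlock (m * n) y = initialBlock (m * n) (concatBlocks n x)) :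
    |birkhoffSum shift φ (m * n) y - ∑ j ∈ Finset.range m, birkhoffSum shift φ n (x j)|
      ≤ m * ε := by
  rw [birkhoffSum_mul, birkhoffSum, ← Finset.sum_sub_distrib]
  refine (Finset.abs_sum_le_sum_abs _ _).trans ?_
  refine (Finset.sum_le_card_nsmul _ _ ε fun j hj => hφ _ _ ?_).trans (by simp)
  rw [← Function.iterate_mul, mul_comm n]
  exact initialBlock_iterate_shift_eq (Finset.mem_range.1 hj) hy

theorem eventually_ae_eventually_abs_birkhoffAverage_sub_lt (hμ : Invariant μ) {φ : Seq N → ℝ}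
    (hφ : Continuous φ) {ε : ℝ} (hε : 0 < ε) :
    ∀ᶠ n : ℕ in atTop, ∀ᵐ x ∂Measure.infinitePi fun _ : ℕ => μ.toMeasure, ∀ᶠ m : ℕ in atTop,
      ∀ y, initialBlock (m * n) y = initialBlock (m * n) (concatBlocks n x) →
        |birkhoffAverage ℝ shift φ (m * n) y - ∫ z, φ z ∂μ.toMeasure| < ε := by
  filter_upwards [eventually_abs_birkhoffSum_sub_le hφ (half_pos hε), eventually_gt_atTop 0]
    with n hvar hn
  have hcont := continuous_birkhoffSum continuous_shift hφ n
  have hmean : ∫ z, birkhoffSum shift φ n z ∂μ.toMeasure = n * ∫ z, φ z ∂μ.toMeasure :=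
    integral_birkhoffSum hμ.measurePreserving (hφ.integrable_of_hasCompactSupport
      (.of_compactSpace _)) n
  filter_upwards [ae_tendsto_average_infinitePi hcont.measurable
    (hcont.integrable_of_hasCompactSupport (.of_compactSpace _))] with x hx
  have hnε : 0 < n * (ε / 2) := by positivity
  filter_upwards [Metric.tendsto_nhds.1 hx _ hnε, eventually_gt_atTop 0] with m hm hm0 y hy
  have hblocks := abs_birkhoffSum_sub_sum_le hvar hy
  have hn' : (0 : ℝ) < n := Nat.cast_pos.2 hn
  have hm' : (0 : ℝ) < m := Nat.cast_pos.2 hm0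
  set I := ∫ z, φ z ∂μ.toMeasure
  set σ := ∑ j ∈ Finset.range m, birkhoffSum shift φ n (x j)
  rw [hmean, Real.dist_eq, div_sub' hm'.ne', abs_div, abs_of_pos hm', div_lt_iff₀ hm'] at hm
  have hsum : |birkhoffSum shift φ (m * n) y - m * n * I| < m * n * ε := by
    have := abs_sub_le (birkhoffSum shift φ (m * n) y) σ (m * (n * I))
    rw [← mul_assoc] at this hm
    linarith
  have hmn : (0 : ℝ) < m * n := mul_pos hm' hn'
  rw [birkhoffAverage, smul_eq_mul, inv_mul_eq_div, Nat.cast_mul, div_sub' hmn.ne', abs_div,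
    abs_of_pos hmn]
  exact (div_lt_iff₀' hmn).2 hsum

/-- The blocks of length `n` all of whose prolongations have their empirical measure of length `n`
in `V`; that is, `L_n [w] ⊆ V`. -/
def typicalBlocks (V : Set (ProbabilityMeasure (Seq N))) (n : ℕ) : Set (Fin n → Fin N) :=
  {w | ∀ x, initialBlock n x = w → emp n x ∈ V}

theorem exists_nhds_forall_mem_typicalBlocks {V : Set (ProbabilityMeasure (Seq N))}
    (hV : V ∈ 𝓝 μ) :
    ∃ W ∈ 𝓝 μ, ∃ θ > (0 : ℝ), ∀ (n l : ℕ) x, n ≠ 0 → l ≤ θ * n →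
      initialBlock n x ∈ typicalBlocks W n → initialBlock (n + l) x ∈ typicalBlocks V (n + l) := by
  obtain ⟨W, hW, θ, hθ, h⟩ := exists_nhds_forall_emp_mem hV
  exact ⟨W, hW, θ, hθ, fun n l x hn hl hx y hy =>
    h n l y hn hl (hx y (initialBlock_eq_of_le le_self_add hy))⟩

theorem eventually_ae_eventually_mem_typicalBlocks (hμ : Invariant μ)
    {V : Set (ProbabilityMeasure (Seq N))} (hV : V ∈ 𝓝 μ) :
    ∀ᶠ n : ℕ in atTop, ∀ᵐ x ∂Measure.infinitePi fun _ : ℕ => μ.toMeasure, ∀ᶠ m : ℕ in atTop,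
      initialBlock (m * n) (concatBlocks n x) ∈ typicalBlocks V (m * n) := by
  obtain ⟨F, hF⟩ := exists_finset_forall_integral_mem_of_mem_nhds hV
  have htests := (eventually_all_finset F).2 fun f _ =>
    eventually_ae_eventually_abs_birkhoffAverage_sub_lt hμ f.continuous one_pos
  filter_upwards [htests, eventually_gt_atTop 0] with n hn hn0
  filter_upwards [(Filter.eventually_all_finset F).2 hn] with x hx
  filter_upwards [(Filter.eventually_all_finset F).2 hx, eventually_gt_atTop 0]
    with m hm hm0 y hy
  refine hF _ fun f hf => ?_
  rw [integral_emp _ (Nat.mul_pos hm0 hn0).ne']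
  exact hm f hf y hy

theorem entropyAux_eq_sum_negMulLog (μ : ProbabilityMeasure (Seq N)) (n : ℕ) :
    entropyAux μ n = ∑ w, Real.negMulLog (μ.toMeasure.real (initialBlock n ⁻¹' {w})) := by
  simp only [entropyAux, Real.negMulLog, neg_mul, Finset.sum_neg_distrib, cylinder_ofFn]
  rfl

theorem entropyAux_nonneg (μ : ProbabilityMeasure (Seq N)) (n : ℕ) : 0 ≤ entropyAux μ n := by
  rw [entropyAux_eq_sum_negMulLog]
  exact Finset.sum_nonneg fun w _ =>
    Real.negMulLog_nonneg measureReal_nonneg measureReal_le_one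

theorem eventually_mul_lt_entropyAux {h : ℝ} (hh : h < entropy μ) :
    ∀ᶠ n : ℕ in atTop, n * h < entropyAux μ n := by
  have hlt := eventually_lt_of_lt_liminf hh
    (isBoundedUnder_of ⟨0, fun n => div_nonneg (entropyAux_nonneg μ n) n.cast_nonneg⟩)
  filter_upwards [hlt, eventually_gt_atTop 0] with n hn hn0
  rwa [lt_div_iff₀' (by exact_mod_cast hn0)] at hn

theorem injOn_initialBlock_concatBlocks {n m B : ℕ} (hB : m * n ≤ B) {T : Set (ℕ → Seq N)}
    (hT : InjOn (fun (x : ℕ → Seq N) (j : Fin m) => initialBlock n (x j)) T) :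
    InjOn (fun x => initialBlock B (concatBlocks n x)) T := by
  refine fun x hx y hy hxy => hT hx hy (funext fun j => ?_)
  have hxy' := initialBlock_eq_of_le hB hxy
  exact (initialBlock_iterate_shift_eq j.2 rfl).symm.trans (initialBlock_iterate_shift_eq j.2 hxy')

theorem tendsto_natCast_div_div_natCast (n : ℕ) :
    Tendsto (fun B : ℕ => ((B / n : ℕ) : ℝ) / B) atTop (𝓝 (n : ℝ)⁻¹) := by
  have := (tendsto_nat_floor_mul_div_atTop (inv_nonneg.2 (Nat.cast_nonneg (α := ℝ) n))).comp
    tendsto_natCast_atTop_atTop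
  refine this.congr fun B => ?_
  simp [inv_mul_eq_div, Nat.floor_div_eq_div]

theorem eventually_exp_le_ncard_typicalBlocks (hμ : Invariant μ)
    {V : Set (ProbabilityMeasure (Seq N))} (hV : V ∈ 𝓝 μ) {h : ℝ} (hh : h < entropy μ) :
    ∀ᶠ B : ℕ in atTop, Real.exp (B * h) ≤ (typicalBlocks V B).ncard := by
  obtain ⟨h', hh', hh'μ⟩ := exists_between hh
  obtain ⟨W, hW, θ, hθ, hprolong⟩ := exists_nhds_forall_mem_typicalBlocks hV
  obtain ⟨n, htyp, hn, hn0⟩ := ((eventually_ae_eventually_mem_typicalBlocks hμ hW).and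
    ((eventually_mul_lt_entropyAux hh'μ).and (eventually_gt_atTop 0))).exists
  rw [entropyAux_eq_sum_negMulLog] at hn
  have hcount := eventually_exists_injOn_exp_mul_le_card (measurable_initialBlock n) hn htyp
  have hdiv : Tendsto (fun B => B / n) atTop atTop := Nat.tendsto_div_const_atTop hn0.ne'
  have hrate : ∀ᶠ B : ℕ in atTop, h < ((B / n : ℕ) : ℝ) / B * (n * h') := by
    refine ((tendsto_natCast_div_div_natCast n).mul_const _).eventually_const_lt ?_
    rwa [inv_mul_cancel_left₀ (by positivity)]
  have hrest : ∀ᶠ B : ℕ in atTop, (n : ℝ) ≤ θ * (B / n * n : ℕ) := by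
    filter_upwards [(tendsto_natCast_atTop_atTop.comp hdiv).eventually_ge_atTop θ⁻¹] with B hB
    rw [Function.comp_apply, inv_le_iff_one_le_mul₀' hθ] at hB
    rw [Nat.cast_mul, ← mul_assoc]
    exact le_mul_of_one_le_left n.cast_nonneg hB
  filter_upwards [hdiv.eventually hcount, hdiv.eventually_gt_atTop 0, hrate, hrest,
    eventually_gt_atTop 0] with B ⟨T, hTtyp, hTinj, hTcard⟩ hm hB hBn hB0
  have hmB : B / n * n ≤ B := Nat.div_mul_le_self B n
  have hmaps : ∀ x ∈ T, initialBlock B (concatBlocks n x) ∈ typicalBlocks V B := by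
    intro x hx
    obtain ⟨l, hl⟩ := Nat.exists_eq_add_of_le hmB
    have hln : l ≤ n := by have := Nat.div_add_mod' B n; have := Nat.mod_lt B hn0; omega
    rw [hl]
    exact hprolong _ l _ (Nat.mul_pos hm hn0).ne' ((Nat.cast_le.2 hln).trans hBn) (hTtyp hx)
  rw [div_mul_eq_mul_div, lt_div_iff₀' (by exact_mod_cast hB0), ← mul_assoc] at hB
  calc Real.exp (B * h) ≤ Real.exp ((B / n : ℕ) * (n * h')) :=
        Real.exp_le_exp.2 (by linarith)
    _ ≤ (T : Set (ℕ → Seq N)).ncard := by rwa [ncard_coe_finset]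
    _ ≤ (typicalBlocks V B).ncard := Nat.cast_le.2 (ncard_le_ncard_of_injOn _ hmaps
        (injOn_initialBlock_concatBlocks hmB hTinj) (toFinite _))

end TypicalBlocks

section StoppedWords

variable {N : ℕ} {X : Type*} {Λ : Seq N → ℝ} {c δ : ℝ}

/-- The finite string `x|L` formed by the first `L` letters of an infinite string `x`. -/
def initialWord (L : ℕ) (x : Seq N) : Word N := List.ofFn (initialBlock L x)

theorem length_initialWord (L : ℕ) (x : Seq N) : (initialWord L x).length = L :=
  List.length_ofFn

theorem mem_cylinder_initialWord {L : ℕ} {x y : Seq N} :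
    y ∈ cylinder (initialWord L x) ↔ initialBlock L y = initialBlock L x :=
  mem_cylinder_ofFn

theorem dropLast_initialWord (L : ℕ) (x : Seq N) :
    (initialWord (L + 1) x).dropLast = initialWord L x := by
  rw [initialWord, List.ofFn_succ', List.concat_eq_append, List.dropLast_concat]
  rfl

theorem inTarget_initialWord {U : ProbabilityMeasure (Seq N) → X} {B : Set X} {L : ℕ}
    {x : Seq N} :
    inTarget U B (initialWord L x) ↔ initialBlock L x ∈ typicalBlocks (U ⁻¹' B) L := by
  simp only [inTarget, mem_cylinder_initialWord, length_initialWord]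
  rfl

theorem sWord_le {w : Word N} {b : ℝ} (h : ∀ x ∈ cylinder w, birkhoff Λ w.length x ≤ b) :
    sWord Λ w ≤ Real.exp b := by
  refine Real.sSup_le ?_ (Real.exp_pos b).le
  rintro _ ⟨x, hx, rfl⟩
  exact Real.exp_le_exp.2 (h x hx)

theorem exp_birkhoff_le_sWord (hΛ : ∀ x, Λ x ≤ c) {w : Word N} {x : Seq N} (hx : x ∈ cylinder w) :
    Real.exp (birkhoff Λ w.length x) ≤ sWord Λ w := by
  refine le_csSup ⟨Real.exp (w.length * c), ?_⟩ ⟨x, hx, rfl⟩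
  rintro _ ⟨y, -, rfl⟩
  exact Real.exp_le_exp.2 (birkhoffSum_le hΛ _ y)

theorem finite_setOf_lt_sWord_dropLast (hc : c < 0) (hΛ : ∀ x, Λ x ≤ c) (hδ : 0 < δ) :
    {w : Word N | δ < sWord Λ w.dropLast}.Finite := by
  obtain ⟨K, hK⟩ := exists_nat_ge (Real.log δ / c)
  refine (List.finite_length_le (Fin N) (K + 1)).subset fun w hw => ?_
  have hlog : Real.log δ < w.dropLast.length * c := (Real.log_lt_iff_lt_exp hδ).2
    (lt_of_lt_of_le hw (sWord_le fun x _ => birkhoffSum_le hΛ _ x))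
  have hlen : w.dropLast.length < K := by
    exact_mod_cast ((lt_div_iff_of_neg hc).2 hlog).trans_le hK
  rw [List.length_dropLast] at hlen
  exact Nat.le_add_of_sub_le (by omega)

theorem ncard_le_Ncount [MetricSpace X] (hc : c < 0) (hΛ : ∀ x, Λ x ≤ c) (hδ : 0 < δ)
    {U : ProbabilityMeasure (Seq N) → X} {C : Set X} {r : ℝ} {B : ℕ}
    {z : (Fin B → Fin N) → Seq N} (hz : Function.RightInverse z (initialBlock B))
    {S : Set (Fin B → Fin N)}
    (hS : ∀ w ∈ S, ∃ L, B ≤ L ∧ δ < sWord Λ (initialWord L (z w)) ∧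
      sWord Λ (initialWord (L + 1) (z w)) ≤ δ ∧
      inTarget U (cball C r) (initialWord (L + 1) (z w))) :
    S.ncard ≤ Ncount Λ U C r δ := by
  choose! L hBL hlt hle htarget using hS
  refine ncard_le_ncard_of_injOn (fun w => initialWord (L w + 1) (z w)) (fun w hw => ?_)
    (fun v _ w hw hvw => ?_)
    ((finite_setOf_lt_sWord_dropLast hc hΛ hδ).subset fun _ hw => hw.2.2.1)
  · refine ⟨List.ne_nil_of_length_eq_add_one (length_initialWord _ _), hle w hw, ?_, htarget w hw⟩
    rw [dropLast_initialWord]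
    exact hlt w hw
  · have hword : initialWord (L v + 1) (z v) = initialWord (L w + 1) (z w) := hvw
    have hmem : z v ∈ cylinder (initialWord (L w + 1) (z w)) :=
      hword ▸ mem_cylinder_initialWord.2 rfl
    rw [← hz v, ← hz w]
    exact initialBlock_eq_of_le ((hBL w hw).trans (Nat.le_succ _))
      (mem_cylinder_initialWord.1 hmem)

theorem exists_stopping_length (hΛ : ∀ x, Λ x ≤ c) (hδ : 0 < δ) {z : Seq N} {B l : ℕ}
    (hlow : Real.log δ < birkhoffSum shift Λ B z)
    (hup : ∀ y, initialBlock B y = initialBlock B z →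
      birkhoffSum shift Λ B y + l * c ≤ Real.log δ) :
    ∃ L, B ≤ L ∧ L < B + l ∧ δ < sWord Λ (initialWord L z) ∧
      sWord Λ (initialWord (L + 1) z) ≤ δ := by
  have hstart : δ < sWord Λ (initialWord B z) := by
    refine lt_of_lt_of_le ?_ (exp_birkhoff_le_sWord hΛ (mem_cylinder_initialWord.2 rfl))
    rw [length_initialWord]
    exact (Real.log_lt_iff_lt_exp hδ).1 hlow
  have hend : sWord Λ (initialWord (B + l) z) ≤ δ := by
    refine (sWord_le fun y hy => ?_).trans (Real.exp_log hδ).le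
    have hyz := initialBlock_eq_of_le le_self_add (mem_cylinder_initialWord.1 hy)
    rw [length_initialWord]
    calc birkhoffSum shift Λ (B + l) y
        = birkhoffSum shift Λ B y + birkhoffSum shift Λ l (shift^[B] y) := birkhoffSum_add ..
      _ ≤ birkhoffSum shift Λ B y + l * c := by
        gcongr
        exact birkhoffSum_le hΛ l _
      _ ≤ Real.log δ := hup y hyz
  by_contra! hcon
  have hstay : ∀ k ≤ l, δ < sWord Λ (initialWord (B + k) z) := fun k => by
    induction k with
    | zero => exact fun _ => hstart
    | succ k ih => exact fun hk => hcon (B + k) le_self_add (by omega) (ih (by omega))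
  exact (hstay l le_rfl).not_ge hend

theorem ncard_typicalBlocks_le_Ncount [MetricSpace X] (hc : c < 0) (hΛ : ∀ x, Λ x ≤ c)
    (hδ : 0 < δ) {U : ProbabilityMeasure (Seq N) → X} {C : Set X} {r : ℝ}
    {W : Set (ProbabilityMeasure (Seq N))} {β γ : ℝ}
    (hW : ∀ ν ∈ W, -β < ∫ x, Λ x ∂ν.toMeasure ∧ ∫ x, Λ x ∂ν.toMeasure < -γ) {B l : ℕ}
    (hB : B ≠ 0) (hprolong : ∀ k ≤ l, ∀ x, initialBlock B x ∈ typicalBlocks W B →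
      initialBlock (B + k) x ∈ typicalBlocks (U ⁻¹' cball C r) (B + k))
    (hlow : B * β ≤ -Real.log δ) (hup : -Real.log δ ≤ B * γ - l * c) :
    (typicalBlocks W B).ncard ≤ Ncount Λ U C r δ := by
  have hB' : (0 : ℝ) < B := Nat.cast_pos.2 (Nat.pos_of_ne_zero hB)
  obtain ⟨z, hz⟩ := (initialBlock_surjective (N := N) hB).hasRightInverse
  refine ncard_le_Ncount hc hΛ hδ hz fun w hw => ?_
  have hsum : ∀ y, initialBlock B y = initialBlock B (z w) →
      -(B * β) < birkhoffSum shift Λ B y ∧ birkhoffSum shift Λ B y < -(B * γ) := by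
    intro y hy
    have hy' := hW _ (hw y (hy.trans (hz w)))
    rwa [integral_emp Λ hB, birkhoffAverage, smul_eq_mul, lt_inv_mul_iff₀ hB', inv_mul_lt_iff₀ hB',
      mul_neg, mul_neg] at hy'
  obtain ⟨L, hBL, hLl, hlt, hle⟩ := exists_stopping_length hΛ hδ (B := B) (l := l)
    (by linarith [(hsum (z w) rfl).1]) fun y hy => by linarith [(hsum y hy).2]
  obtain ⟨k, rfl⟩ := Nat.exists_eq_add_of_le hBL
  exact ⟨B + k, hBL, hlt, hle, inTarget_initialWord.2
    (hprolong (k + 1) (by omega) _ ((hz w).symm ▸ hw))⟩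

end StoppedWords

section Asymptotics

variable {N : ℕ} {X : Type*} [MetricSpace X] {Λ : Seq N → ℝ} {c : ℝ}
  {U : ProbabilityMeasure (Seq N) → X} {C : Set X} {r : ℝ} {μ : ProbabilityMeasure (Seq N)}

theorem preimage_cball_mem_nhds (hU : Continuous U) (hμC : U μ ∈ C) (hr : 0 < r) :
    U ⁻¹' cball C r ∈ 𝓝 μ := by
  have hcont : Continuous fun ν => infDist (U ν) C := (continuous_infDist_pt C).comp hU
  have hμr : infDist (U μ) C < r := by rwa [infDist_zero_of_mem hμC]
  filter_upwards [hcont.continuousAt.eventually_lt_const hμr] with ν hν using hν.le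

theorem tendsto_neg_log_nhdsGT_zero : Tendsto (fun δ : ℝ => -Real.log δ) (𝓝[>] 0) atTop :=
  tendsto_neg_atBot_atTop.comp Real.tendsto_log_nhdsGT_zero

theorem integral_mem_Ioo_mem_nhds (hΛ : Continuous Λ) {a b : ℝ}
    (h : ∫ x, Λ x ∂μ.toMeasure ∈ Ioo a b) :
    {ν : ProbabilityMeasure (Seq N) | ∫ x, Λ x ∂ν.toMeasure ∈ Ioo a b} ∈ 𝓝 μ :=
  (ProbabilityMeasure.continuous_integral_boundedContinuousFunction
    (.mkOfCompact ⟨Λ, hΛ⟩)).continuousAt (Ioo_mem_nhds h.1 h.2)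

theorem integral_neg_of_forall_le (hΛcont : Continuous Λ) (hc : c < 0) (hΛ : ∀ x, Λ x ≤ c) :
    ∫ x, Λ x ∂μ.toMeasure < 0 := by
  refine lt_of_le_of_lt ?_ hc
  simpa using integral_mono (hΛcont.integrable_of_hasCompactSupport (.of_compactSpace _))
    (integrable_const (μ := μ.toMeasure) c) hΛ

theorem eventually_exp_le_Ncount (hΛcont : Continuous Λ) (hc : c < 0) (hΛ : ∀ x, Λ x ≤ c)
    (hμ : Invariant μ) (hV : U ⁻¹' cball C r ∈ 𝓝 μ) {h : ℝ} (hh : h < entropy μ) :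
    ∀ᶠ β in 𝓝[>] (-∫ x, Λ x ∂μ.toMeasure), ∀ᶠ δ in 𝓝[>] (0 : ℝ),
      Real.exp (⌊-Real.log δ / β⌋₊ * h) ≤ Ncount Λ U C r δ := by
  obtain ⟨W, hW, θ, hθ, hprolong⟩ := exists_nhds_forall_mem_typicalBlocks hV
  obtain ⟨α, hα⟩ : ∃ α, ∫ x, Λ x ∂μ.toMeasure = -α := ⟨_, (neg_neg _).symm⟩
  have hα0 : 0 < α := neg_neg_iff_pos.1 (hα ▸ integral_neg_of_forall_le hΛcont hc hΛ)
  rw [hα, neg_neg]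
  -- A typical block of length `B` has size between `e^{-βB}` and `e^{-(2α-β)B}`. Prolonging it
  -- by `θB` letters brings in a factor `e^{cθB}`, enough to descend below `e^{-βB}` if `β` is
  -- near `α`.
  have hαβ : α < α - θ * c / 2 := by nlinarith
  filter_upwards [Ioo_mem_nhdsGT hαβ] with β ⟨hβ, hβθ⟩
  have hβ0 := hα0.trans hβ
  have hWβ := integral_mem_Ioo_mem_nhds (a := -β) (b := -(2 * α - β)) hΛcont
    (by rw [hα]; constructor <;> linarith)
  have hcount := eventually_exp_le_ncard_typicalBlocks hμ (inter_mem hW hWβ) hh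
  have hlarge : ∀ᶠ B : ℕ in atTop, β - c ≤ B * (-(θ * c) - 2 * (β - α)) :=
    (tendsto_natCast_atTop_atTop.atTop_mul_const (by linarith)).eventually_ge_atTop _
  have hfloor : Tendsto (fun δ : ℝ => ⌊-Real.log δ / β⌋₊) (𝓝[>] 0) atTop :=
    tendsto_nat_floor_atTop.comp (tendsto_neg_log_nhdsGT_zero.atTop_div_const hβ0)
  filter_upwards [hfloor.eventually hcount, hfloor.eventually hlarge,
    hfloor.eventually_gt_atTop 0, tendsto_neg_log_nhdsGT_zero.eventually_ge_atTop 0,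
    self_mem_nhdsWithin] with δ hδcount hδlarge hB hD hδ
  set B := ⌊-Real.log δ / β⌋₊
  have hlow : B * β ≤ -Real.log δ :=
    (le_div_iff₀ hβ0).1 (Nat.floor_le (div_nonneg hD hβ0.le))
  have hup : -Real.log δ < (B + 1) * β := (div_lt_iff₀ hβ0).1 (Nat.lt_floor_add_one _)
  have hl := Nat.lt_floor_add_one (θ * B)
  refine hδcount.trans (Nat.cast_le.2 ?_)
  refine ncard_typicalBlocks_le_Ncount (l := ⌊θ * B⌋₊) hc hΛ hδ (fun ν hν => hν.2) hB.ne'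
    ?_ hlow ?_
  · intro k hk x hx
    refine hprolong B k x hB.ne' ?_ fun y hy => (hx y hy).1
    exact (Nat.le_floor_iff (by positivity)).1 hk
  · nlinarith

theorem le_ratioE {m : ℕ} {t δ : ℝ} (hδ : 0 < -Real.log δ)
    (h : Real.exp (t * -Real.log δ) ≤ m) : (t : EReal) ≤ ratioE m δ := by
  have hm : (0 : ℝ) < m := (Real.exp_pos _).trans_le h
  rw [ratioE, if_neg (by exact_mod_cast hm.ne'), EReal.coe_le_coe_iff, le_div_iff₀ hδ]
  exact (Real.le_log_iff_exp_le hm).2 h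

theorem eventually_le_ratioE (hΛcont : Continuous Λ) (hc : c < 0) (hΛ : ∀ x, Λ x ≤ c)
    (hμ : Invariant μ) (hV : U ⁻¹' cball C r ∈ 𝓝 μ) {t : ℝ}
    (ht : t < -(entropy μ) / ∫ x, Λ x ∂μ.toMeasure) :
    ∀ᶠ δ in 𝓝[>] (0 : ℝ), (t : EReal) ≤ ratioE (Ncount Λ U C r δ) δ := by
  have hneg := integral_neg_of_forall_le (μ := μ) hΛcont hc hΛ
  rw [lt_div_iff_of_neg hneg, neg_lt, ← mul_neg] at ht
  obtain ⟨h, hth, hh⟩ := exists_between ht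
  have hβ : ∀ᶠ β in 𝓝[>] (-∫ x, Λ x ∂μ.toMeasure), t * β < h ∧ 0 < β :=
    (((continuous_const_mul t).continuousAt.eventually_lt_const hth).and
      (lt_mem_nhds (neg_pos.2 hneg))).filter_mono nhdsWithin_le_nhds
  obtain ⟨β, hcount, htβ, hβ0⟩ :=
    ((eventually_exp_le_Ncount hΛcont hc hΛ hμ hV hh).and hβ).exists
  have hrate : ∀ᶠ D : ℝ in atTop, t < (⌊β⁻¹ * D⌋₊ : ℝ) / D * h := by
    refine ((tendsto_nat_floor_mul_div_atTop (inv_nonneg.2 hβ0.le)).mul_const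
      h).eventually_const_lt ?_
    rwa [inv_mul_eq_div, lt_div_iff₀ hβ0]
  filter_upwards [hcount, tendsto_neg_log_nhdsGT_zero.eventually hrate,
    tendsto_neg_log_nhdsGT_zero.eventually_gt_atTop 0] with δ hδ hδrate hD
  refine le_ratioE hD ((Real.exp_le_exp.2 ?_).trans hδ)
  rw [div_mul_eq_mul_div, lt_div_iff₀ hD, inv_mul_eq_div] at hδrate
  exact hδrate.le

theorem varSup_le_coarseLower_general (hΛcont : Continuous Λ) (hc : c < 0) (hΛ : ∀ x, Λ x ≤ c)
    (hU : Continuous U) (C : Set X) : varSup Λ U C ≤ coarseLower Λ U C := by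
  refine sSup_le ?_
  rintro _ ⟨μ, hμ, hμC, rfl⟩
  refine le_iInf₂ fun r hr => EReal.ge_of_forall_gt_iff_ge.1 fun t ht => ?_
  exact le_liminf_of_le (by isBoundedDefault) (eventually_le_ratioE hΛcont hc hΛ hμ
    (preimage_cball_mem_nhds hU hμC hr) (EReal.coe_lt_coe_iff.1 ht))

end Asymptotics

/-- **Theorem 6.6.** `sup { -h(μ)/∫Λ dμ : μ ∈ 𝒫_S(Σ^ℕ), Uμ ∈ C } ≤ f̲^{U,Λ}(C)`. -/
theorem varSup_le_coarseLower
    {N : ℕ} (hN : 0 < N) {X : Type*} [MetricSpace X]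
    (Λ : Seq N → ℝ) (hΛcont : Continuous Λ)
    (cmin cmax : ℝ) (hcmax : cmax < 0) (hccmin : cmin ≤ cmax)
    (hΛbdd : ∀ x, Λ x ∈ Set.Icc cmin cmax)
    (c : ℝ) (hc : 1 ≤ c) (hdist : BddDistortion Λ c)
    (U : ProbabilityMeasure (Seq N) → X) (hU : Continuous U)
    (C : Set X) (hC : IsClosed C) :
    varSup Λ U C ≤ coarseLower Λ U C :=
  varSup_le_coarseLower_general hΛcont hcmax (fun x => (hΛbdd x).2) hU C

end Multifractal
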